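/- Let (A,Λ) be an associative form ring with 1, n ≥ 3, and let (I,Γ), (J,Δ) be form ideals of (A,Λ). For any index i ∈ Ω, any a ∈ λ^{−(ε(i)+1)/2}Γ, b ∈ λ^{(ε(i)−1)/2}Δ, and any x ∈ EU(2n,A,Λ), one has x·Y_{i,−i}(a,b)·x⁻¹ ≡ Y_{i,−i}(a,b) modulo EU(2n,(I,Γ)∘(J,Δ)), i.e. x·Y_{i,−i}(a,b)·x⁻¹·Y_{i,−i}(a,b)⁻¹ ∈ EU(2n,(I,Γ)∘(J,Δ)), where Y_{i,−i}(a,b) = [T_{i,−i}(a), T_{−i,i}(b)]. -/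

import Mathlib

open Matrix
open scoped commutatorElement

/-- Bak's form ring data on a ring `A`: an involution `bar`, a central symmetry
`λ` with `λ λ̄ = 1`, and a form parameter `Λ`. -/
structure FormRingData (A : Type*) [Ring A] where
  bar : A →+ A
  bar_mul : ∀ a b : A, bar (a * b) = bar b * bar a
  bar_bar : ∀ a : A, bar (bar a) = a
  lam : A
  lam_comm : ∀ a : A, lam * a = a * lam
  lam_bar : lam * bar lam = 1
  Lambda : AddSubgroup A
  lambdaMin_mem : ∀ c : A, c - lam * bar c ∈ Lambda
  lambdaMax_mem : ∀ x ∈ Lambda, x = -(lam * bar x)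
  lambda_conj : ∀ (c : A), ∀ x ∈ Lambda, c * x * bar c ∈ Lambda

namespace FormRingData

variable {A : Type*} [Ring A]

/-- Integral powers of the symmetry `λ`; negative powers use `λ̄ = λ⁻¹`. -/
def lpow (D : FormRingData A) (k : ℤ) : A :=
  if 0 ≤ k then D.lam ^ k.toNat else (D.bar D.lam) ^ (-k).toNat

end FormRingData

/-- The index set `Ω = {1,…,n,−n,…,−1}`, coded as `Fin n × Bool`
(second component `true` = positive index). -/
abbrev Idx (n : ℕ) := Fin n × Bool

namespace Idx

/-- The involution `i ↦ −i` on indices. -/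
def neg {n : ℕ} (i : Idx n) : Idx n := (i.1, !i.2)

/-- The sign `ε(i) ∈ {±1}`. -/
def eps {n : ℕ} (i : Idx n) : ℤ := if i.2 then 1 else -1

theorem neg_ne {n : ℕ} (i : Idx n) : neg i ≠ i := by
  simp [neg, Prod.ext_iff]

theorem neg_injective {n : ℕ} : Function.Injective (neg (n := n)) := by
  intro i j h
  simp only [neg, Prod.mk.injEq] at h
  refine Prod.ext h.1 ?_
  have h2 := h.2
  cases hi : i.2 <;> cases hj : j.2 <;> simp_all

theorem neg_neg {n : ℕ} (i : Idx n) : neg (neg i) = i := by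
  simp [neg]

end Idx

/-- `GL(2n, A)`, realised as the units of the `Ω × Ω` matrix ring over `A`. -/
abbrev GLn (A : Type*) [Ring A] (n : ℕ) := (Matrix (Idx n) (Idx n) A)ˣ

section aux

theorem one_add_mul_one_sub {R : Type*} [Ring R] {X : R} (h : X * X = 0) :
    (1 + X) * (1 - X) = 1 := by
  have hh : (1 + X) * (1 - X) = 1 - X * X := by noncomm_ring
  rw [hh, h, sub_zero]

theorem one_sub_mul_one_add {R : Type*} [Ring R] {X : R} (h : X * X = 0) :
    (1 - X) * (1 + X) = 1 := by
  have hh : (1 - X) * (1 + X) = 1 - X * X := by noncomm_ring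
  rw [hh, h, sub_zero]

theorem stdBasisMatrix_neg' {A : Type*} [Ring A] {n : ℕ} (i j : Idx n) (c : A) :
    single i j (-c) = -single i j c := by
  refine eq_neg_of_add_eq_zero_left ?_
  rw [← Matrix.single_add]
  simp

end aux

namespace FormRingData

variable {A : Type*} [Ring A] {n : ℕ}

/-- The off-diagonal part of a short root element. -/
def Xmat (D : FormRingData A) (i j : Idx n) (c : A) : Matrix (Idx n) (Idx n) A :=
  single i j c -
    single (Idx.neg j) (Idx.neg i) (D.lpow ((Idx.eps j - Idx.eps i) / 2) * D.bar c)

theorem Xmat_mul (D : FormRingData A) {i j : Idx n} (hij : i ≠ j) (c c' : A) :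
    D.Xmat i j c * D.Xmat i j c' = 0 := by
  unfold Xmat
  rw [sub_mul, mul_sub, mul_sub,
    Matrix.single_mul_single_of_ne _ _ _ _ (Ne.symm hij),
    Matrix.single_mul_single_of_ne _ _ _ _ (Ne.symm (Idx.neg_ne j)),
    Matrix.single_mul_single_of_ne _ _ _ _ (Idx.neg_ne i),
    Matrix.single_mul_single_of_ne _ _ _ _ (fun h => hij (Idx.neg_injective h))]
  simp

theorem Xmat_neg (D : FormRingData A) (i j : Idx n) (c : A) :
    D.Xmat i j (-c) = -D.Xmat i j c := by
  unfold Xmat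
  rw [map_neg, mul_neg, stdBasisMatrix_neg', stdBasisMatrix_neg']
  abel

/-- The elementary short root unipotent `T_{ij}(c)`, for `i ≠ ±j`
(with junk value `1` when `i = j`). -/
def TS (D : FormRingData A) (i j : Idx n) (c : A) : GLn A n :=
  if h : i = j then 1 else
    { val := 1 + D.Xmat i j c
      inv := 1 + D.Xmat i j (-c)
      val_inv := by
        rw [D.Xmat_neg, ← sub_eq_add_neg]
        exact one_add_mul_one_sub (D.Xmat_mul h c c)
      inv_val := by
        rw [D.Xmat_neg, ← sub_eq_add_neg]
        exact one_sub_mul_one_add (D.Xmat_mul h c c) }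

/-- The elementary long root unipotent `T_{i,−i}(c)`. -/
def TL (D : FormRingData A) (i : Idx n) (c : A) : GLn A n where
  val := 1 + single i (Idx.neg i) c
  inv := 1 + single i (Idx.neg i) (-c)
  val_inv := by
    rw [stdBasisMatrix_neg', ← sub_eq_add_neg]
    exact one_add_mul_one_sub (Matrix.single_mul_single_of_ne _ _ _ _ (Idx.neg_ne i) _)
  inv_val := by
    rw [stdBasisMatrix_neg', ← sub_eq_add_neg]
    exact one_sub_mul_one_add (Matrix.single_mul_single_of_ne _ _ _ _ (Idx.neg_ne i) _)

/-- The elementary unitary transvection `T_{ij}(c)` (long or short root type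
according to whether `j = −i`). -/
def T (D : FormRingData A) (i j : Idx n) (c : A) : GLn A n :=
  if j = Idx.neg i then D.TL i c else D.TS i j c

/-- The elementary commutator `Y_{ij}(a,b) = [T_{ij}(a), T_{ji}(b)]`. -/
def Y (D : FormRingData A) (i j : Idx n) (a b : A) : GLn A n :=
  ⁅D.T i j a, D.T j i b⁆

/-- The elementary conjugate `Z_{ij}(a,c) = T_{ji}(c) T_{ij}(a) T_{ji}(−c)`. -/
def Z (D : FormRingData A) (i j : Idx n) (a c : A) : GLn A n :=
  D.T j i c * D.T i j a * D.T j i (-c)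

/-- The set of elementary unitary transvections of level `(I,Γ)`. -/
def transvGen (D : FormRingData A) (n : ℕ) (I Γ : AddSubgroup A) : Set (GLn A n) :=
  {x | ∃ i j : Idx n, i ≠ j ∧ i ≠ Idx.neg j ∧ ∃ c ∈ I, x = D.TS i j c} ∪
    {x | ∃ i : Idx n, ∃ g ∈ Γ, x = D.TL i (D.lpow (-(Idx.eps i + 1) / 2) * g)}

/-- The unrelative elementary subgroup `FU(2n, I, Γ)`. -/
def FU (D : FormRingData A) (n : ℕ) (I Γ : AddSubgroup A) : Subgroup (GLn A n) :=
  Subgroup.closure (D.transvGen n I Γ)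

/-- The absolute elementary unitary group `EU(2n, A, Λ)`. -/
def EUmax (D : FormRingData A) (n : ℕ) : Subgroup (GLn A n) :=
  D.FU n ⊤ D.Lambda

/-- The relative elementary subgroup `EU(2n, I, Γ)`: the normal closure of
`FU(2n, I, Γ)` in `EU(2n, A, Λ)`. -/
def EU (D : FormRingData A) (n : ℕ) (I Γ : AddSubgroup A) : Subgroup (GLn A n) :=
  Subgroup.closure {x | ∃ g ∈ D.EUmax n, ∃ t ∈ D.transvGen n I Γ, x = g * t * g⁻¹}

/-- The additive subgroup generated by products `st`, `s ∈ S`, `t ∈ T`. -/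
def mulSub (S T : AddSubgroup A) : AddSubgroup A :=
  AddSubgroup.closure {x | ∃ a ∈ S, ∃ b ∈ T, x = a * b}

/-- The symmetrised product `ST + TS` of two (additive subgroups underlying)
two-sided ideals. -/
def symI (S T : AddSubgroup A) : AddSubgroup A :=
  mulSub S T ⊔ mulSub T S

/-- The minimal relative form parameter `Γ_min(K)` of level `K`. -/
def gammaMin (D : FormRingData A) (K : AddSubgroup A) : AddSubgroup A :=
  AddSubgroup.closure
    ({x | ∃ a ∈ K, x = a - D.lam * D.bar a} ∪
      {x | ∃ a ∈ K, ∃ c ∈ D.Lambda, x = a * c * D.bar a})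

/-- The relative form parameter `ˢΓ = ⟨ b γ b̄ ∣ b ∈ S, γ ∈ Γ ⟩`. -/
def conjPar (D : FormRingData A) (S Γ : AddSubgroup A) : AddSubgroup A :=
  AddSubgroup.closure {x | ∃ b ∈ S, ∃ g ∈ Γ, x = b * g * D.bar b}

/-- The relative form parameter of the symmetrised product
`(I,Γ)∘(J,Δ) = (IJ+JI, Γ_min(IJ+JI) + ᴶΓ + ᴵΔ)`. -/
def symG (D : FormRingData A) (I Γ J Δ : AddSubgroup A) : AddSubgroup A :=
  D.gammaMin (symI I J) ⊔ D.conjPar J Γ ⊔ D.conjPar I Δ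

/-- The elementary subgroup `EU(2n, (I,Γ)∘(J,Δ))` of the symmetrised product. -/
def EUsym (D : FormRingData A) (n : ℕ) (I Γ J Δ : AddSubgroup A) : Subgroup (GLn A n) :=
  D.EU n (symI I J) (D.symG I Γ J Δ)

/-- Position-dependent membership `a ∈ (I,Γ)` at position `(i,j)`:
`a ∈ I` for a short root position, `a ∈ λ^{−(ε(i)+1)/2}Γ` for a long one. -/
def pmem (D : FormRingData A) (I Γ : AddSubgroup A) {n : ℕ} (i j : Idx n) (a : A) : Prop :=
  if j = Idx.neg i then ∃ g ∈ Γ, a = D.lpow (-(Idx.eps i + 1) / 2) * g else a ∈ I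

end FormRingData

/-- A form ideal `(I,Γ)` of the form ring `(A,Λ)`. -/
structure FormIdeal {A : Type*} [Ring A] (D : FormRingData A) where
  I : AddSubgroup A
  Gamma : AddSubgroup A
  mul_mem_left : ∀ (c : A), ∀ x ∈ I, c * x ∈ I
  mul_mem_right : ∀ (c : A), ∀ x ∈ I, x * c ∈ I
  bar_mem : ∀ x ∈ I, D.bar x ∈ I
  gammaMin_le : D.gammaMin I ≤ Gamma
  gamma_le_I : Gamma ≤ I
  gamma_le_Lambda : Gamma ≤ D.Lambda
  gamma_conj : ∀ (c : A), ∀ x ∈ Gamma, c * x * D.bar c ∈ Gamma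

set_option linter.unusedSimpArgs false

namespace FormRingData

variable {A : Type*} [Ring A] {n : ℕ}

theorem lpow_zero' (D : FormRingData A) : D.lpow 0 = 1 := by simp [lpow]
theorem lpow_one' (D : FormRingData A) : D.lpow 1 = D.lam := by simp [lpow]
theorem lpow_neg_one' (D : FormRingData A) : D.lpow (-1) = D.bar D.lam := by simp [lpow]

theorem bar_one' (D : FormRingData A) : D.bar 1 = 1 := by
  have h := D.bar_mul 1 (D.bar 1)
  rw [one_mul, D.bar_bar, one_mul] at h
  exact h.symm

theorem lamb_comm (D : FormRingData A) (a : A) : D.bar D.lam * a = a * D.bar D.lam := by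
  have h := congrArg D.bar (D.lam_comm (D.bar a))
  rw [D.bar_mul, D.bar_mul, D.bar_bar] at h
  exact h.symm

theorem lamb_lam (D : FormRingData A) : D.bar D.lam * D.lam = 1 := by
  rw [← D.lam_comm, D.lam_bar]

theorem lam_lamb_mul (D : FormRingData A) (x : A) : D.lam * (D.bar D.lam * x) = x := by
  rw [← mul_assoc, D.lam_bar, one_mul]

theorem lamb_lam_mul (D : FormRingData A) (x : A) : D.bar D.lam * (D.lam * x) = x := by
  rw [← mul_assoc, D.lamb_lam, one_mul]

theorem TS_val (D : FormRingData A) {i j : Idx n} (h : i ≠ j) (c : A) :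
    (D.TS i j c).val = 1 + D.Xmat i j c := by
  simp [TS, h]

theorem TL_val (D : FormRingData A) (i : Idx n) (c : A) :
    (D.TL i c).val = 1 + single i (Idx.neg i) c := rfl

theorem bar_Lambda (D : FormRingData A) {d : A} (hd : d ∈ D.Lambda) :
    D.bar d = -(D.bar D.lam * d) := by
  have h := D.lambdaMax_mem d hd
  have : D.bar D.lam * d = -D.bar d := by
    conv_lhs => rw [h]
    rw [mul_neg, lamb_lam_mul]
  rw [this, _root_.neg_neg]

/-- Long root parameters. -/
def LP (D : FormRingData A) (S : AddSubgroup A) (i : Idx n) (a : A) : Prop :=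
  ∃ g ∈ S, a = D.lpow (-(Idx.eps i + 1) / 2) * g

theorem TS_TL_comm (D : FormRingData A) {j k i : Idx n} (hjk : j ≠ k) (h1 : k ≠ i)
    (h2 : j ≠ Idx.neg i) (c a : A) : Commute (D.TS j k c) (D.TL i a) := by
  have h3 : Idx.neg j ≠ i := fun h => h2 (by rw [← h, Idx.neg_neg])
  have h4 : Idx.neg i ≠ Idx.neg k := fun h => h1 (Idx.neg_injective h).symm
  apply Units.ext
  rw [Units.val_mul, Units.val_mul, D.TS_val hjk, D.TL_val]
  have e1 : D.Xmat j k c * single i (Idx.neg i) a = 0 := by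
    unfold Xmat
    rw [sub_mul, Matrix.single_mul_single_of_ne _ _ _ _ h1,
      Matrix.single_mul_single_of_ne _ _ _ _ h3, sub_zero]
  have e2 : single i (Idx.neg i) a * D.Xmat j k c = 0 := by
    unfold Xmat
    rw [mul_sub, Matrix.single_mul_single_of_ne _ _ _ _ h2.symm,
      Matrix.single_mul_single_of_ne _ _ _ _ h4, sub_zero]
  rw [add_mul, mul_add, mul_add, add_mul, mul_add, mul_add, e1, e2]
  simp only [one_mul, mul_one]
  abel

theorem TL_TL_comm (D : FormRingData A) {j i : Idx n} (h : j ≠ Idx.neg i) (c a : A) :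
    Commute (D.TL j c) (D.TL i a) := by
  have h3 : Idx.neg j ≠ i := fun h' => h (by rw [← h', Idx.neg_neg])
  apply Units.ext
  rw [Units.val_mul, Units.val_mul, D.TL_val, D.TL_val]
  have e1 : single j (Idx.neg j) c * single i (Idx.neg i) a = 0 :=
    Matrix.single_mul_single_of_ne _ _ _ _ h3 _
  have e2 : single i (Idx.neg i) a * single j (Idx.neg j) c = 0 :=
    Matrix.single_mul_single_of_ne _ _ _ _ h.symm _
  rw [add_mul, mul_add, mul_add, add_mul, mul_add, mul_add, e1, e2]
  simp only [one_mul, mul_one]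
  abel

theorem key_coeff (D : FormRingData A) {i k : Idx n} {b : A}
    (hb : D.LP D.Lambda (Idx.neg i) b) (c : A) :
    D.lpow ((Idx.eps k - Idx.eps (Idx.neg i)) / 2) * D.bar (b * c) =
      -(D.lpow ((Idx.eps k - Idx.eps i) / 2) * D.bar c * b) := by
  obtain ⟨d, hd, rfl⟩ := hb
  have hd' := D.bar_Lambda hd
  have hc1 : ∀ y, D.bar c * (D.bar D.lam * y) = D.bar D.lam * (D.bar c * y) := fun y => by
    rw [← mul_assoc, ← D.lamb_comm, mul_assoc]
  have hc2 : ∀ y, D.bar c * (D.lam * y) = D.lam * (D.bar c * y) := fun y => by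
    rw [← mul_assoc, ← D.lam_comm, mul_assoc]
  have hd1 : d * D.lam = D.lam * d := (D.lam_comm d).symm
  obtain ⟨i, si⟩ := i
  obtain ⟨k, sk⟩ := k
  cases si <;> cases sk <;>
    simp [Idx.eps, Idx.neg, lpow_zero', lpow_one', lpow_neg_one', D.bar_mul, D.bar_bar, hd',
      mul_assoc, hc1, hc2, hd1, D.lam_lamb_mul, D.lamb_lam_mul]

theorem conj_formula (D : FormRingData A) {i k : Idx n} (h1 : i ≠ k) (h2 : i ≠ Idx.neg k)
    {b : A} (hb : D.LP D.Lambda (Idx.neg i) b) (c : A) :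
    D.TS i k c * D.TL (Idx.neg i) b * (D.TS i k c)⁻¹ =
      D.TL (Idx.neg i) b * D.TS (Idx.neg i) k (-(b * c)) *
        D.TL (Idx.neg k) (D.lpow ((Idx.eps k - Idx.eps i) / 2) * D.bar c * b * c) := by
  have h3 : Idx.neg i ≠ k := fun h => h2 (by rw [← h, Idx.neg_neg])
  have hk := key_coeff D (k := k) hb c
  rw [mul_inv_eq_iff_eq_mul]
  apply Units.ext
  simp only [Units.val_mul]
  rw [D.TS_val h1, D.TS_val h3, D.TL_val, D.TL_val]
  unfold Xmat
  rw [map_neg, mul_neg, hk]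
  generalize D.lpow ((Idx.eps k - Idx.eps i) / 2) = μ
  have n1 := Idx.neg_ne i
  have n2 := Idx.neg_ne k
  have h4 : Idx.neg k ≠ i := h2.symm
  have h5 : Idx.neg k ≠ Idx.neg i := fun h => h1 (Idx.neg_injective h).symm
  simp only [Idx.neg_neg, _root_.neg_neg, stdBasisMatrix_neg', add_mul, mul_add, sub_mul, mul_sub,
    one_mul, mul_one, neg_mul, mul_neg, Matrix.single_mul_single_same,
    Matrix.single_mul_single_of_ne _ _ _ _ n1, Matrix.single_mul_single_of_ne _ _ _ _ n1.symm,
    Matrix.single_mul_single_of_ne _ _ _ _ n2, Matrix.single_mul_single_of_ne _ _ _ _ n2.symm,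
    Matrix.single_mul_single_of_ne _ _ _ _ h1, Matrix.single_mul_single_of_ne _ _ _ _ h1.symm,
    Matrix.single_mul_single_of_ne _ _ _ _ h2, Matrix.single_mul_single_of_ne _ _ _ _ h2.symm,
    Matrix.single_mul_single_of_ne _ _ _ _ h3, Matrix.single_mul_single_of_ne _ _ _ _ h3.symm,
    Matrix.single_mul_single_of_ne _ _ _ _ h5, Matrix.single_mul_single_of_ne _ _ _ _ h5.symm,
    zero_mul, mul_zero, neg_zero, sub_zero, add_zero, zero_add, mul_assoc]
  abel

theorem TS_flip (D : FormRingData A) {j k : Idx n} (h : j ≠ k) (c : A) :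
    ∃ c', D.TS j k c = D.TS (Idx.neg k) (Idx.neg j) c' := by
  have h' : Idx.neg k ≠ Idx.neg j := fun e => h (Idx.neg_injective e).symm
  refine ⟨-(D.lpow ((Idx.eps k - Idx.eps j) / 2) * D.bar c), ?_⟩
  apply Units.ext
  rw [D.TS_val h, D.TS_val h']
  unfold Xmat
  have : D.lpow ((Idx.eps (Idx.neg j) - Idx.eps (Idx.neg k)) / 2) *
      D.bar (D.lpow ((Idx.eps k - Idx.eps j) / 2) * D.bar c) = c := by
    have hc1 : c * D.bar D.lam = D.bar D.lam * c := (D.lamb_comm c).symm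
    have hc2 : c * D.lam = D.lam * c := (D.lam_comm c).symm
    obtain ⟨j, sj⟩ := j
    obtain ⟨k, sk⟩ := k
    cases sj <;> cases sk <;>
      simp [Idx.eps, Idx.neg, lpow_zero', lpow_one', lpow_neg_one', D.bar_mul, D.bar_bar,
        D.bar_one', hc1, hc2, D.lam_lamb_mul, D.lamb_lam_mul]
  rw [map_neg, mul_neg, this]
  simp only [Idx.neg_neg, stdBasisMatrix_neg']
  abel

theorem EU_conj (D : FormRingData A) (I Γ : AddSubgroup A) {x y : GLn A n}
    (hx : x ∈ D.EUmax n) (hy : y ∈ D.EU n I Γ) : x * y * x⁻¹ ∈ D.EU n I Γ := by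
  unfold EU at hy ⊢
  induction hy using Subgroup.closure_induction with
  | mem y hy =>
    obtain ⟨g, hg, t, ht, rfl⟩ := hy
    refine Subgroup.subset_closure ⟨x * g, mul_mem hx hg, t, ht, by group⟩
  | one => simp
  | mul y z _ _ h1 h2 =>
    have : x * (y * z) * x⁻¹ = (x * y * x⁻¹) * (x * z * x⁻¹) := by group
    rw [this]; exact mul_mem h1 h2
  | inv y _ h =>
    have : x * y⁻¹ * x⁻¹ = (x * y * x⁻¹)⁻¹ := by group
    rw [this]; exact inv_mem h

theorem gen_mem_EU (D : FormRingData A) (I Γ : AddSubgroup A) {t : GLn A n}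
    (ht : t ∈ D.transvGen n I Γ) : t ∈ D.EU n I Γ :=
  Subgroup.subset_closure ⟨1, one_mem _, t, ht, by group⟩

/-- The elements of `EUmax` commuting with `y` modulo `EU`. -/
def Cent (D : FormRingData A) (I Γ : AddSubgroup A) (y : GLn A n) : Subgroup (GLn A n) where
  carrier := {x | x ∈ D.EUmax n ∧ x * y * x⁻¹ * y⁻¹ ∈ D.EU n I Γ}
  one_mem' := ⟨one_mem _, by simp⟩
  mul_mem' := by
    rintro u v ⟨hu, hu'⟩ ⟨hv, hv'⟩
    refine ⟨mul_mem hu hv, ?_⟩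
    have : u * v * y * (u * v)⁻¹ * y⁻¹ =
      (u * (v * y * v⁻¹ * y⁻¹) * u⁻¹) * (u * y * u⁻¹ * y⁻¹) := by group
    rw [this]
    exact mul_mem (D.EU_conj I Γ hu hv') hu'
  inv_mem' := by
    rintro u ⟨hu, hu'⟩
    refine ⟨inv_mem hu, ?_⟩
    have : u⁻¹ * y * u⁻¹⁻¹ * y⁻¹ = u⁻¹ * (u * y * u⁻¹ * y⁻¹)⁻¹ * u⁻¹⁻¹ := by group
    rw [this]
    exact D.EU_conj I Γ (inv_mem hu) (inv_mem hu')

theorem symI_comm (S T : AddSubgroup A) : symI S T = symI T S := sup_comm _ _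

theorem symG_comm (D : FormRingData A) (I Γ J Δ : AddSubgroup A) :
    D.symG I Γ J Δ = D.symG J Δ I Γ := by
  unfold symG
  rw [symI_comm I J, sup_assoc, sup_assoc, sup_comm (D.conjPar J Γ)]

theorem TL_mem_EUmax (D : FormRingData A) {i : Idx n} {a : A} (ha : D.LP D.Lambda i a) :
    D.TL i a ∈ D.EUmax n := by
  obtain ⟨g, hg, rfl⟩ := ha
  exact Subgroup.subset_closure (Or.inr ⟨i, g, hg, rfl⟩)

theorem TS_mem_EUmax (D : FormRingData A) {i k : Idx n} (h1 : i ≠ k) (h2 : i ≠ Idx.neg k)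
    (c : A) : D.TS i k c ∈ D.EUmax n :=
  Subgroup.subset_closure (Or.inl ⟨i, k, h1, h2, c, trivial, rfl⟩)

theorem LP_Lambda {D : FormRingData A} (F : FormIdeal D) {i : Idx n} {a : A}
    (ha : D.LP F.Gamma i a) : D.LP D.Lambda i a := by
  obtain ⟨g, hg, rfl⟩ := ha
  exact ⟨g, F.gamma_le_Lambda hg, rfl⟩

theorem LP_I {D : FormRingData A} (F : FormIdeal D) {i : Idx n} {a : A}
    (ha : D.LP F.Gamma i a) : a ∈ F.I := by
  obtain ⟨g, hg, rfl⟩ := ha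
  exact F.mul_mem_left _ _ (F.gamma_le_I hg)

theorem group_step {G : Type*} [Group G] {x t s v p : G} (h1 : Commute x t)
    (h2 : x * s * x⁻¹ = s * v * p) (h3 : Commute p t) :
    x * ⁅t, s⁆ * x⁻¹ * ⁅t, s⁆⁻¹ =
      (t * s * t⁻¹) * (v * t * v⁻¹ * t⁻¹)⁻¹ * (t * s * t⁻¹)⁻¹ := by
  have e1 : x * t * x⁻¹ = t := by rw [h1.eq]; group
  have e2 : x * ⁅t, s⁆ * x⁻¹ = ⁅x * t * x⁻¹, x * s * x⁻¹⁆ := by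
    simp only [commutatorElement_def]; group
  have e3 : p * t⁻¹ * p⁻¹ = t⁻¹ := by rw [h3.inv_right.eq]; group
  rw [e2, e1, h2]
  simp only [commutatorElement_def]
  calc t * (s * v * p) * t⁻¹ * (s * v * p)⁻¹ * (t * s * t⁻¹ * s⁻¹)⁻¹
      = t * s * v * (p * t⁻¹ * p⁻¹) * v⁻¹ * s⁻¹ * (t * s * t⁻¹ * s⁻¹)⁻¹ := by group
    _ = _ := by rw [e3]; group

theorem short_mem (D : FormRingData A) (FI FJ : FormIdeal D) {i k : Idx n}
    (h1 : i ≠ k) (h2 : i ≠ Idx.neg k) {a b : A} (ha : D.LP FI.Gamma i a)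
    (hb : D.LP FJ.Gamma (Idx.neg i) b) (c : A) :
    D.TS i k c ∈ D.Cent (symI FI.I FJ.I) (D.symG FI.I FI.Gamma FJ.I FJ.Gamma)
      ⁅D.TL i a, D.TL (Idx.neg i) b⁆ := by
  have h3 : Idx.neg i ≠ k := fun h => h2 (by rw [← h, Idx.neg_neg])
  have h4 : Idx.neg i ≠ Idx.neg k := fun h => h1 (Idx.neg_injective h)
  have ht := D.TL_mem_EUmax (LP_Lambda FI ha)
  have hs := D.TL_mem_EUmax (LP_Lambda FJ hb)
  refine ⟨D.TS_mem_EUmax h1 h2 c, ?_⟩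
  rw [group_step (D.TS_TL_comm h1 h1.symm (Idx.neg_ne i).symm c a)
    (D.conj_formula h1 h2 (LP_Lambda FJ hb) c) (D.TL_TL_comm h4.symm _ _)]
  refine D.EU_conj _ _ (mul_mem (mul_mem ht hs) (inv_mem ht)) (inv_mem ?_)
  have hcJ : -(b * c) ∈ FJ.I := neg_mem (FJ.mul_mem_right _ _ (LP_I FJ hb))
  generalize -(b * c) = c' at hcJ
  have ha' : D.LP FI.Gamma (Idx.neg (Idx.neg i)) a := by rwa [Idx.neg_neg]
  have hf := D.conj_formula h3 h4 (LP_Lambda FI ha') c'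
  rw [Idx.neg_neg] at hf
  rw [hf, mul_assoc (D.TL i a)]
  refine D.EU_conj _ _ ht (mul_mem (D.gen_mem_EU _ _ (Or.inl ⟨i, k, h1, h2, _, ?_, rfl⟩))
    (D.gen_mem_EU _ _ (Or.inr ⟨Idx.neg k, D.bar c' * ?_ * c', ?_, ?_⟩)))
  · refine neg_mem (AddSubgroup.mem_sup_left (AddSubgroup.subset_closure ⟨a, LP_I FI ha, c', hcJ, rfl⟩))
  · exact ha.choose
  · refine AddSubgroup.mem_sup_left (AddSubgroup.mem_sup_right (AddSubgroup.subset_closure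
      ⟨D.bar c', FJ.bar_mem _ hcJ, ha.choose, ha.choose_spec.1, ?_⟩))
    rw [D.bar_bar]
  · congr 1
    have := ha.choose_spec.2
    generalize ha.choose = g at this
    subst this
    clear * -
    have hc1 : ∀ y, D.bar c' * (D.bar D.lam * y) = D.bar D.lam * (D.bar c' * y) := fun y => by
      rw [← mul_assoc, ← D.lamb_comm, mul_assoc]
    obtain ⟨i, si⟩ := i
    obtain ⟨k, sk⟩ := k
    cases si <;> cases sk <;>
      simp [Idx.eps, Idx.neg, lpow_zero', lpow_one', lpow_neg_one', mul_assoc, hc1, D.lam_lamb_mul, D.lamb_lam_mul]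

theorem short_mem' (D : FormRingData A) (FI FJ : FormIdeal D) {i k : Idx n}
    (h1 : Idx.neg i ≠ k) (h2 : Idx.neg i ≠ Idx.neg k) {a b : A} (ha : D.LP FI.Gamma i a)
    (hb : D.LP FJ.Gamma (Idx.neg i) b) (c : A) :
    D.TS (Idx.neg i) k c ∈ D.Cent (symI FI.I FJ.I) (D.symG FI.I FI.Gamma FJ.I FJ.Gamma)
      ⁅D.TL i a, D.TL (Idx.neg i) b⁆ := by
  have ht := D.TL_mem_EUmax (LP_Lambda FI ha)
  have hs := D.TL_mem_EUmax (LP_Lambda FJ hb)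
  have ha' : D.LP FI.Gamma (Idx.neg (Idx.neg i)) a := by rwa [Idx.neg_neg]
  have h := (D.short_mem FJ FI h1 h2 hb ha' c)
  rw [symI_comm, symG_comm, Idx.neg_neg, ← commutatorElement_inv] at h
  have hY : ⁅D.TL i a, D.TL (Idx.neg i) b⁆ ∈ D.EUmax n := by
    rw [commutatorElement_def]
    exact mul_mem (mul_mem (mul_mem ht hs) (inv_mem ht)) (inv_mem hs)
  refine ⟨h.1, ?_⟩
  have h2 := D.EU_conj _ _ hY (inv_mem h.2)
  generalize ⁅D.TL i a, D.TL (Idx.neg i) b⁆ = y at h2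
  convert h2 using 1
  group

theorem mem_Cent_of_commute (D : FormRingData A) (I Γ : AddSubgroup A) {x t s : GLn A n}
    (hx : x ∈ D.EUmax n) (h1 : Commute x t) (h2 : Commute x s) :
    x ∈ D.Cent I Γ ⁅t, s⁆ := by
  refine ⟨hx, ?_⟩
  have : Commute x ⁅t, s⁆ := by
    rw [commutatorElement_def]
    exact ((h1.mul_right h2).mul_right h1.inv_right).mul_right h2.inv_right
  rw [this.eq, mul_inv_cancel_right, mul_inv_cancel]
  exact one_mem _

theorem all_short (D : FormRingData A) (FI FJ : FormIdeal D) {i j k : Idx n}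
    (h1 : j ≠ k) (h2 : j ≠ Idx.neg k) {a b : A} (ha : D.LP FI.Gamma i a)
    (hb : D.LP FJ.Gamma (Idx.neg i) b) (c : A) :
    D.TS j k c ∈ D.Cent (symI FI.I FJ.I) (D.symG FI.I FI.Gamma FJ.I FJ.Gamma)
      ⁅D.TL i a, D.TL (Idx.neg i) b⁆ := by
  have main : ∀ {j k : Idx n} (h1 : j ≠ k) (h2 : j ≠ Idx.neg k) (c : A), j = i ∨ j = Idx.neg i →
      D.TS j k c ∈ D.Cent (symI FI.I FJ.I) (D.symG FI.I FI.Gamma FJ.I FJ.Gamma)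
      ⁅D.TL i a, D.TL (Idx.neg i) b⁆ := by
    rintro j k h1 h2 c (rfl | rfl)
    · exact D.short_mem FI FJ h1 h2 ha hb c
    · exact D.short_mem' FI FJ h1 h2 ha hb c
  by_cases hj : j = i ∨ j = Idx.neg i
  · exact main h1 h2 c hj
  by_cases hk : k = i ∨ k = Idx.neg i
  · obtain ⟨c', hc'⟩ := D.TS_flip h1 c
    rw [hc']
    refine main (fun e => h1 (Idx.neg_injective e).symm) ?_ c' ?_
    · rw [Idx.neg_neg]; exact h2.symm
    · rcases hk with rfl | rfl
      · exact Or.inr rfl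
      · exact Or.inl (Idx.neg_neg _)
  push Not at hj hk
  exact D.mem_Cent_of_commute _ _ (D.TS_mem_EUmax h1 h2 c)
    (D.TS_TL_comm h1 hk.1 hj.2 _ _)
    (D.TS_TL_comm h1 hk.2 (by rw [Idx.neg_neg]; exact hj.1) _ _)

theorem all_long (D : FormRingData A) (hn : 3 ≤ n) (FI FJ : FormIdeal D) {i j : Idx n}
    {a b : A} (ha : D.LP FI.Gamma i a)
    (hb : D.LP FJ.Gamma (Idx.neg i) b) {c : A} (hc : D.LP D.Lambda j c) :
    D.TL j c ∈ D.Cent (symI FI.I FJ.I) (D.symG FI.I FI.Gamma FJ.I FJ.Gamma)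
      ⁅D.TL i a, D.TL (Idx.neg i) b⁆ := by
  have main : ∀ {j : Idx n} {c : A}, D.LP D.Lambda j c → j ≠ i → j ≠ Idx.neg i →
      D.TL j c ∈ D.Cent (symI FI.I FJ.I) (D.symG FI.I FI.Gamma FJ.I FJ.Gamma)
      ⁅D.TL i a, D.TL (Idx.neg i) b⁆ := by
    intro j c hc h1 h2
    exact D.mem_Cent_of_commute _ _ (D.TL_mem_EUmax hc) (D.TL_TL_comm h2 _ _)
      (D.TL_TL_comm (by rw [Idx.neg_neg]; exact h1) _ _)
  by_cases hj : j ≠ i ∧ j ≠ Idx.neg i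
  · exact main hc hj.1 hj.2
  have hji : j.1 = i.1 := by
    by_contra h
    exact hj ⟨fun e => h (by rw [e]), fun e => h (by rw [e]; rfl)⟩
  haveI : Nontrivial (Fin n) := Fin.nontrivial_iff_two_le.mpr (by omega)
  obtain ⟨m, hm⟩ := exists_ne i.1
  -- the auxiliary index has the same sign as j
  let q : Idx n := (m, j.2)
  have hq : D.LP D.Lambda (Idx.neg (Idx.neg q)) c := by
    rw [Idx.neg_neg]
    exact hc
  have hqi : q ≠ i := fun e => hm (by rw [← e])
  have hqi' : q ≠ Idx.neg i := fun e => hm (by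
    have := congrArg Prod.fst e
    exact this)
  have g1 : Idx.neg q ≠ Idx.neg j := fun e => hm (by
    have := congrArg Prod.fst e
    exact this.trans hji)
  have g2 : Idx.neg q ≠ j := fun e => hm (by
    have := congrArg Prod.fst e
    exact this.trans hji)
  have g2' : Idx.neg q ≠ Idx.neg (Idx.neg j) := by rw [Idx.neg_neg]; exact g2
  have g3 : q ≠ Idx.neg j := fun e => hm (by
    have := congrArg Prod.fst e
    exact this.trans hji)
  have g4 : q ≠ Idx.neg (Idx.neg j) := by
    rw [Idx.neg_neg]
    exact fun e => g1 (by rw [e])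
  have hf := D.conj_formula g1 g2' hq 1
  rw [Idx.neg_neg, Idx.neg_neg] at hf
  have he : D.lpow ((Idx.eps (Idx.neg j) - Idx.eps (Idx.neg q)) / 2) * D.bar 1 * c * 1 = c := by
    have : Idx.eps (Idx.neg j) - Idx.eps (Idx.neg q) = 0 := by
      simp [q, Idx.eps, Idx.neg]
    rw [this]
    simp [lpow_zero', D.bar_one']
  rw [he] at hf
  rw [Idx.neg_neg] at hq
  have m1 := main hq hqi hqi'
  have m2 := D.all_short FI FJ g1 g2' ha hb 1
  have m3 := D.all_short FI FJ g3 g4 ha hb (-(c * 1))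
  rw [← inv_mul_eq_iff_eq_mul] at hf
  rw [← hf]
  exact mul_mem (inv_mem (mul_mem m1 m3)) (mul_mem (mul_mem m2 m1) (inv_mem m2))

end FormRingData

/-- Lemma 7: long root elementary commutators `Y_{i,−i}(a,b)` are invariant
under conjugation by `EU(2n,A,Λ)` modulo `EU(2n,(I,Γ)∘(J,Δ))`. -/
theorem statement9 {A : Type*} [Ring A] (D : FormRingData A) (n : ℕ) (hn : 3 ≤ n)
    (FI FJ : FormIdeal D) (i : Idx n) (a b : A)
    (ha : ∃ g ∈ FI.Gamma, a = D.lpow (-(Idx.eps i + 1) / 2) * g)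
    (hb : ∃ d ∈ FJ.Gamma, b = D.lpow ((Idx.eps i - 1) / 2) * d)
    (x : GLn A n) (hx : x ∈ D.EUmax n) :
    x * ⁅D.TL i a, D.TL (Idx.neg i) b⁆ * x⁻¹ * (⁅D.TL i a, D.TL (Idx.neg i) b⁆)⁻¹ ∈
      D.EUsym n FI.I FI.Gamma FJ.I FJ.Gamma := by
  have hb' : D.LP FJ.Gamma (Idx.neg i) b := by
    obtain ⟨d, hd, rfl⟩ := hb
    refine ⟨d, hd, ?_⟩
    congr 2
    obtain ⟨i, si⟩ := i
    cases si <;> simp [Idx.eps, Idx.neg]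
  have h : D.EUmax n ≤ D.Cent (FormRingData.symI FI.I FJ.I)
      (D.symG FI.I FI.Gamma FJ.I FJ.Gamma) ⁅D.TL i a, D.TL (Idx.neg i) b⁆ := by
    unfold FormRingData.EUmax FormRingData.FU
    rw [Subgroup.closure_le]
    rintro y (⟨j, k, h1, h2, c, -, rfl⟩ | ⟨j, g, hg, rfl⟩)
    · exact D.all_short FI FJ h1 h2 ha hb' c
    · exact D.all_long hn FI FJ ha hb' ⟨g, hg, rfl⟩
  exact (h hx).2
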